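/- Let q = 2^m with m odd, and γ = 1. Then the map u ↦ u⁵ + u³ + u is a bijection of F_q. More generally, for γ ∈ F_q*, the map u ↦ u⁵ + u³ + γ^{-1}u is a bijection of F_q if and only if γ = 1 and m is odd. -/

import Mathlib

/-!
In characteristic 2, `f u = u⁵ + u³ + βu` takes equal values at the distinct points `st` and
`s(t + 1)` iff `s²` is a root of `(1 + r + r²)X² + (1 + r)X + β`, where `r = t² + t`. By additive
Hilbert 90 the values of `r` are the elements of trace `0`, and a quadratic `aX² + bX + c` with
`b ≠ 0` has a root iff `ac / b²` has trace `0`. If `m` is even then `r = 1` is allowed, and `X² + β`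
has a root. If `m` is odd and `β = b²`, then with `x = 1 + r` injectivity says that `trace x = 1`
forces `trace ((b² + b) / x) = trace b + 1`. For `β = 1` this reads `0 = 0`. Otherwise the numerator
is nonzero and `m ≥ 3`, and no such implication can hold: multiplied by `x ^ (q / 2)` and reduced
modulo `trace x = 1`, it would give a nonzero polynomial of degree less than `q / 2` vanishing at
the `q / 2` elements of trace `1`.
-/

open Algebra Module Polynomial

theorem trace_one_eq_finrank {R S : Type*} [CommRing R] [StrongRankCondition R] [CommRing S]
    [Algebra R S] [Free R S] : trace R S 1 = finrank R S := by
  rw [← map_one (algebraMap R S), trace_algebraMap, nsmul_one]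

section FiniteFieldTrace

variable {K L : Type*} [Field K] [Field L] [Finite L] [Algebra K L]

theorem trace_pow_natCard (x : L) : trace K L (x ^ Nat.card K) = trace K L x := by
  have := Finite.of_injective _ (algebraMap K L).injective
  have := Fintype.ofFinite K
  simpa [Nat.card_eq_fintype_card] using
    trace_eq_of_algEquiv (FiniteField.frobeniusAlgEquivOfAlgebraic K L) x

theorem mem_range_algebraMap_of_pow_natCard_eq {x : L} (hx : x ^ Nat.card K = x) :
    x ∈ Set.range (algebraMap K L) := by
  have := Finite.of_injective _ (algebraMap K L).injective
  have := Fintype.ofFinite K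
  rw [IsGalois.mem_range_algebraMap_iff_fixed]
  intro σ
  obtain ⟨n, rfl⟩ := (FiniteField.bijective_frobeniusAlgEquivOfAlgebraic_pow K L).2 σ
  rw [AlgEquiv.coe_pow]
  refine Function.iterate_fixed ?_ _
  rwa [Nat.card_eq_fintype_card] at hx

variable (K L) in
theorem finrank_ker_trace_add_one : finrank K (trace K L).ker + 1 = finrank K L :=
  Dual.finrank_ker_add_one_of_ne_zero (trace_ne_zero K L)

/-- Additive Hilbert 90, by comparing dimensions: the kernel of `y ↦ y ^ #K - y` is the line `K`. -/
theorem exists_pow_natCard_sub_eq_iff_trace_eq_zero {x : L} :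
    (∃ y, y ^ Nat.card K - y = x) ↔ trace K L x = 0 := by
  have := Finite.of_injective _ (algebraMap K L).injective
  have := Fintype.ofFinite K
  let φ : L →ₗ[K] L := (FiniteField.frobeniusAlgHom K L).toLinearMap - LinearMap.id
  have φ_apply (y : L) : φ y = y ^ Nat.card K - y := by
    simp [φ, Nat.card_eq_fintype_card]
  have range_le : φ.range ≤ (trace K L).ker := by
    rintro _ ⟨y, rfl⟩
    rw [LinearMap.mem_ker, φ_apply, map_sub, trace_pow_natCard, sub_self]
  have ker_le : φ.ker ≤ K ∙ (1 : L) := fun y hy ↦ by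
    rw [LinearMap.mem_ker, φ_apply, sub_eq_zero] at hy
    obtain ⟨a, rfl⟩ := mem_range_algebraMap_of_pow_natCard_eq hy
    exact Submodule.mem_span_singleton.2 ⟨a, (algebraMap_eq_smul_one a).symm⟩
  have finrank_ker_le : finrank K φ.ker ≤ 1 :=
    (Submodule.finrank_mono ker_le).trans (finrank_span_singleton one_ne_zero).le
  have range_eq : φ.range = (trace K L).ker :=
    Submodule.eq_of_le_of_finrank_le range_le <| by
      have := φ.finrank_range_add_finrank_ker
      have := finrank_ker_trace_add_one K L
      omega
  simp only [← LinearMap.mem_ker, ← range_eq, LinearMap.mem_range, φ_apply]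

end FiniteFieldTrace

theorem pow_ne_pow_sub_one {q d : ℕ} (hq : 1 < q) (hd : 2 ≤ d) (j : ℕ) : q ^ j ≠ q ^ d - 1 := by
  have four_le : 2 ^ 2 ≤ q ^ d :=
    (Nat.pow_le_pow_left hq 2).trans (Nat.pow_le_pow_right (by omega) hd)
  intro h
  rcases j with _ | j
  · rw [pow_zero] at h
    omega
  · have dvd_one : q ∣ q ^ d - q ^ (j + 1) :=
      Nat.dvd_sub (dvd_pow_self q (by omega)) (dvd_pow_self q j.succ_ne_zero)
    rw [h, Nat.sub_sub_self (by omega), Nat.dvd_one] at dvd_one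
    omega

section TraceDivPoly

variable {K L : Type*} [Field K] [Field L] [Algebra K L]

/-- For `[L : K] = d + 1`, the polynomial of degree less than `#K ^ d` which agrees with
`X ^ #K ^ d * (trace (c / X) - b)` at the elements of trace `a`: there the term `X ^ #K ^ d`
coming from `b` can be replaced by `a - ∑ j < d, X ^ #K ^ j`. -/
noncomputable def traceDivPoly (d : ℕ) (a b : K) (c : L) : L[X] :=
  ∑ j ∈ Finset.range (d + 1), C (c ^ Nat.card K ^ j) * X ^ (Nat.card K ^ d - Nat.card K ^ j) -
    C (algebraMap K L b) *
      (C (algebraMap K L a) - ∑ j ∈ Finset.range d, X ^ Nat.card K ^ j)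

theorem natDegree_traceDivPoly_lt [Finite K] (d : ℕ) (a b : K) (c : L) :
    (traceDivPoly d a b c).natDegree < Nat.card K ^ d := by
  have one_lt_card : 1 < Nat.card K := Finite.one_lt_card
  have pow_pos (j : ℕ) : 0 < Nat.card K ^ j := Nat.pow_pos Nat.card_pos
  have first_le : (∑ j ∈ Finset.range (d + 1),
      C (c ^ Nat.card K ^ j) * X ^ (Nat.card K ^ d - Nat.card K ^ j)).natDegree ≤
        Nat.card K ^ d - 1 :=
    natDegree_sum_le_of_forall_le _ _ fun j _ ↦
      (natDegree_C_mul_X_pow_le _ _).trans (Nat.sub_le_sub_left (pow_pos j) _)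
  have second_le : (∑ j ∈ Finset.range d, (X : L[X]) ^ Nat.card K ^ j).natDegree ≤
      Nat.card K ^ d - 1 :=
    natDegree_sum_le_of_forall_le _ _ fun j hj ↦ (natDegree_X_pow_le _).trans <|
      Nat.le_sub_one_of_lt (Nat.pow_lt_pow_right one_lt_card (Finset.mem_range.1 hj))
  refine lt_of_le_of_lt ?_ (Nat.sub_one_lt (pow_pos d).ne')
  rw [traceDivPoly, ← max_self (Nat.card K ^ d - 1)]
  refine natDegree_sub_le_of_le first_le ((natDegree_C_mul_le _ _).trans ?_)
  rw [← max_eq_right (Nat.zero_le (Nat.card K ^ d - 1))]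
  exact natDegree_sub_le_of_le (natDegree_C _).le second_le

theorem coeff_traceDivPoly [Finite K] {d : ℕ} (hd : 2 ≤ d) (a b : K) (c : L) :
    (traceDivPoly d a b c).coeff (Nat.card K ^ d - 1) = c := by
  have one_lt_card : 1 < Nat.card K := Finite.one_lt_card
  have one_lt : 1 < Nat.card K ^ d := Nat.one_lt_pow (by omega) one_lt_card
  have sub_eq_iff {j : ℕ} (hj : j ∈ Finset.range (d + 1)) :
      Nat.card K ^ d - 1 = Nat.card K ^ d - Nat.card K ^ j ↔ j = 0 := by
    have le : Nat.card K ^ j ≤ Nat.card K ^ d :=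
      Nat.pow_le_pow_right Nat.card_pos (Finset.mem_range_succ_iff.1 hj)
    rw [← pow_eq_one_iff_right one_lt_card.ne']
    omega
  have first_coeff : ∑ j ∈ Finset.range (d + 1),
      (C (c ^ Nat.card K ^ j) * X ^ (Nat.card K ^ d - Nat.card K ^ j)).coeff
        (Nat.card K ^ d - 1) = c := by
    rw [Finset.sum_eq_single_of_mem 0 (by simp)]
    · simp
    · intro j hj hj0
      rw [coeff_C_mul_X_pow, if_neg (mt (sub_eq_iff hj).1 hj0)]
  have second_coeff : ∑ j ∈ Finset.range d, ((X : L[X]) ^ Nat.card K ^ j).coeff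
      (Nat.card K ^ d - 1) = 0 :=
    Finset.sum_eq_zero fun j _ ↦ by
      rw [coeff_X_pow, if_neg (pow_ne_pow_sub_one one_lt_card hd j).symm]
  rw [traceDivPoly, coeff_sub, coeff_C_mul, coeff_sub, finsetSum_coeff, finsetSum_coeff,
    first_coeff, second_coeff, coeff_C_of_ne_zero (by omega), sub_zero, mul_zero, sub_zero]

end TraceDivPoly

section TraceFibre

variable {K L : Type*} [Field K] [Field L] [Finite L] [Algebra K L]

theorem eq_zero_of_natDegree_lt_of_eval_eq_zero_of_trace_eq {p : L[X]} {a : K} {d : ℕ}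
    (hd : finrank K L = d + 1) (hp : p.natDegree < Nat.card K ^ d)
    (heval : ∀ x, trace K L x = a → p.eval x = 0) : p = 0 := by
  have := Finite.of_injective _ (algebraMap K L).injective
  have := Fintype.ofFinite (trace K L).ker
  obtain ⟨x₀, hx₀⟩ := trace_surjective K L a
  refine eq_zero_of_natDegree_lt_card_of_eval_eq_zero p
    (f := fun z : (trace K L).ker ↦ (z : L) + x₀)
    ((add_left_injective x₀).comp Subtype.val_injective) (fun z ↦ heval _ ?_) ?_
  · rw [map_add, hx₀, LinearMap.mem_ker.1 z.2, zero_add]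
  · rwa [← Nat.card_eq_fintype_card, natCard_eq_pow_finrank (K := K),
      show finrank K (trace K L).ker = d from
        Nat.succ_injective ((finrank_ker_trace_add_one K L).trans hd)]

theorem eval_traceDivPoly {d : ℕ} (hd : finrank K L = d + 1) (b : K) (c : L) {x : L}
    (hx : x ≠ 0) :
    (traceDivPoly d (trace K L x) b c).eval x =
      x ^ Nat.card K ^ d * algebraMap K L (trace K L (c / x) - b) := by
  have := Finite.of_injective _ (algebraMap K L).injective
  have trace_div : x ^ Nat.card K ^ d * algebraMap K L (trace K L (c / x)) =
      ∑ j ∈ Finset.range (d + 1), c ^ Nat.card K ^ j * x ^ (Nat.card K ^ d - Nat.card K ^ j) := by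
    rw [FiniteField.algebraMap_trace_eq_sum_pow, hd, Finset.mul_sum]
    refine Finset.sum_congr rfl fun j hj ↦ ?_
    rw [pow_sub₀ x hx (Nat.pow_le_pow_right Nat.card_pos (Finset.mem_range_succ_iff.1 hj)), div_pow]
    ring
  have trace_self : algebraMap K L (trace K L x) - ∑ j ∈ Finset.range d, x ^ Nat.card K ^ j =
      x ^ Nat.card K ^ d := by
    rw [FiniteField.algebraMap_trace_eq_sum_pow, hd, Finset.sum_range_succ, add_sub_cancel_left]
  simp only [traceDivPoly, eval_sub, eval_mul, eval_C, eval_finsetSum, eval_pow, eval_X]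
  rw [trace_self, ← trace_div, map_sub]
  ring

theorem exists_trace_eq_and_trace_div_ne (hn : 2 < finrank K L) {a : K} (ha : a ≠ 0) (b : K)
    {c : L} (hc : c ≠ 0) : ∃ x, trace K L x = a ∧ trace K L (c / x) ≠ b := by
  have := Finite.of_injective _ (algebraMap K L).injective
  by_contra! h
  obtain ⟨d, hd⟩ := Nat.exists_eq_succ_of_ne_zero (Nat.ne_zero_of_lt hn)
  have eval_eq_zero (x : L) (hx : trace K L x = a) : (traceDivPoly d a b c).eval x = 0 := by
    have hx0 : x ≠ 0 := by
      rintro rfl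
      exact ha (hx.symm.trans (map_zero _))
    rw [← hx, eval_traceDivPoly hd b c hx0, h x hx, sub_self, map_zero, mul_zero]
  have poly_eq_zero : traceDivPoly d a b c = 0 :=
    eq_zero_of_natDegree_lt_of_eval_eq_zero_of_trace_eq hd
      (natDegree_traceDivPoly_lt d a b c) eval_eq_zero
  rw [← coeff_traceDivPoly (by omega : 2 ≤ d) a b c, poly_eq_zero, coeff_zero] at hc
  exact hc rfl

end TraceFibre

attribute [local instance] ZMod.algebra

/-- The polynomial function `u ↦ u⁵ + u³ + βu` whose bijectivity is in question; `β` plays the role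
of `γ⁻¹`. -/
def quintic {R : Type*} [Semiring R] (β u : R) : R := u ^ 5 + u ^ 3 + β * u

theorem quintic_mul_add_quintic_mul_add_one {R : Type*} [CommRing R] [CharP R 2] (β s t : R) :
    quintic β (s * t) + quintic β (s * (t + 1)) =
      s * ((1 + (t ^ 2 + t) + (t ^ 2 + t) ^ 2) * (s ^ 2) ^ 2 + (1 + (t ^ 2 + t)) * s ^ 2 + β) := by
  simp only [quintic]
  linear_combination
    (s ^ 5 * (t ^ 5 + 2 * t ^ 4 + 4 * t ^ 3 + 4 * t ^ 2 + 2 * t) + s ^ 3 * (t ^ 3 + t ^ 2 + t) +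
      β * s * t) * CharTwo.two_eq_zero (R := R)

section CharTwo

variable {F : Type*} [Field F] [CharP F 2]

theorem quintic_mul_eq_quintic_mul_add_one_iff (β s t : F) :
    quintic β (s * t) = quintic β (s * (t + 1)) ↔ s = 0 ∨
      (1 + (t ^ 2 + t) + (t ^ 2 + t) ^ 2) * (s ^ 2) ^ 2 + (1 + (t ^ 2 + t)) * s ^ 2 + β = 0 := by
  rw [← CharTwo.add_eq_zero, quintic_mul_add_quintic_mul_add_one, mul_eq_zero]

variable [Finite F]

theorem exists_sq_eq_of_charTwo (a : F) : ∃ b, b ^ 2 = a := by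
  obtain ⟨b, rfl⟩ := isSquare_of_charTwo' a
  exact ⟨b, sq b⟩

theorem trace_sq (x : F) : trace (ZMod 2) F (x ^ 2) = trace (ZMod 2) F x := by
  simpa using trace_pow_natCard (K := ZMod 2) x

theorem exists_sq_add_self_eq_iff_trace_eq_zero {x : F} :
    (∃ y, y ^ 2 + y = x) ↔ trace (ZMod 2) F x = 0 := by
  simpa [CharTwo.sub_eq_add] using
    exists_pow_natCard_sub_eq_iff_trace_eq_zero (K := ZMod 2) (x := x)

theorem exists_quadratic_eq_zero_iff_trace_eq_zero {a b c : F} (hb : b ≠ 0) :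
    (∃ x, a * x ^ 2 + b * x + c = 0) ↔ trace (ZMod 2) F (a * c / b ^ 2) = 0 := by
  simp only [← exists_sq_add_self_eq_iff_trace_eq_zero, CharTwo.add_eq_zero]
  constructor
  · rintro ⟨x, rfl⟩
    exact ⟨a * x / b, by field_simp⟩
  · rintro ⟨y, hy⟩
    rcases eq_or_ne a 0 with rfl | ha
    · exact ⟨c / b, by field_simp; ring⟩
    · refine ⟨b * y / a, ?_⟩
      field_simp at hy ⊢
      linear_combination hy

theorem injective_quintic_iff_forall_quadratic_ne_zero {β : F} (hβ : β ≠ 0) :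
    Function.Injective (quintic β) ↔
      ∀ r, trace (ZMod 2) F r = 0 → ¬∃ x, (1 + r + r ^ 2) * x ^ 2 + (1 + r) * x + β = 0 := by
  constructor
  · rintro hinj r hr ⟨x, hx⟩
    obtain ⟨t, rfl⟩ := exists_sq_add_self_eq_iff_trace_eq_zero.2 hr
    obtain ⟨s, rfl⟩ := exists_sq_eq_of_charTwo x
    have s_mul_eq : s * t = s * (t + 1) :=
      hinj ((quintic_mul_eq_quintic_mul_add_one_iff β s t).2 (.inr hx))
    obtain rfl : s = 0 := by linear_combination -s_mul_eq
    exact hβ (by simpa using hx)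
  · intro hroot u v huv
    by_contra! hne
    have hs : u + v ≠ 0 := mt CharTwo.add_eq_zero.1 hne
    have hu : (u + v) * (u / (u + v)) = u := mul_div_cancel₀ u hs
    have hv : (u + v) * (u / (u + v) + 1) = v := by
      rw [mul_add, hu, mul_one, CharTwo.add_cancel_left]
    set t := u / (u + v)
    have hquintic := quintic_mul_eq_quintic_mul_add_one_iff β (u + v) t
    rw [hu, hv] at hquintic
    exact hroot (t ^ 2 + t) (exists_sq_add_self_eq_iff_trace_eq_zero.1 ⟨t, rfl⟩)
      ⟨_, (hquintic.1 huv).resolve_left hs⟩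

theorem trace_mul_sq_div_one_add_sq (b : F) {r : F} (hr : 1 + r ≠ 0) :
    trace (ZMod 2) F ((1 + r + r ^ 2) * b ^ 2 / (1 + r) ^ 2) =
      trace (ZMod 2) F b + trace (ZMod 2) F ((b ^ 2 + b) / (1 + r)) := by
  have leading_eq : 1 + r + r ^ 2 = (1 + r) ^ 2 + (1 + r) + 1 := by
    linear_combination -(1 + r) * CharTwo.two_eq_zero (R := F)
  have expand : (1 + r + r ^ 2) * b ^ 2 / (1 + r) ^ 2 =
      b ^ 2 + ((b / (1 + r)) ^ 2 + b ^ 2 / (1 + r)) := by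
    rw [leading_eq]
    field_simp
    ring
  rw [expand, map_add, map_add, trace_sq, trace_sq, ← map_add, ← add_div, add_comm b]

theorem injective_quintic_sq_iff_of_odd (hn : Odd (finrank (ZMod 2) F)) {b : F} (hb : b ≠ 0) :
    Function.Injective (quintic (b ^ 2)) ↔ ∀ x, trace (ZMod 2) F x = 1 →
      trace (ZMod 2) F ((b ^ 2 + b) / x) = trace (ZMod 2) F b + 1 := by
  have trace_one : trace (ZMod 2) F 1 = 1 := by
    rw [trace_one_eq_finrank, ZMod.natCast_eq_one_iff_odd.2 hn]
  have no_root_iff {r : F} (hr : trace (ZMod 2) F r = 0) :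
      (¬∃ s, (1 + r + r ^ 2) * s ^ 2 + (1 + r) * s + b ^ 2 = 0) ↔
        trace (ZMod 2) F ((b ^ 2 + b) / (1 + r)) = trace (ZMod 2) F b + 1 := by
    have one_add_ne_zero : 1 + r ≠ 0 := fun h ↦ by
      rw [← CharTwo.add_eq_zero.1 h, trace_one] at hr
      exact one_ne_zero hr
    rw [exists_quadratic_eq_zero_iff_trace_eq_zero one_add_ne_zero,
      trace_mul_sq_div_one_add_sq b one_add_ne_zero]
    generalize trace (ZMod 2) F b = y, trace (ZMod 2) F ((b ^ 2 + b) / (1 + r)) = z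
    decide +revert
  rw [injective_quintic_iff_forall_quadratic_ne_zero (pow_ne_zero 2 hb)]
  constructor
  · intro no_root x hx
    have trace_eq_zero : trace (ZMod 2) F (1 + x) = 0 := by
      rw [map_add, trace_one, hx, CharTwo.add_self_eq_zero]
    simpa only [CharTwo.add_cancel_left] using
      (no_root_iff trace_eq_zero).1 (no_root _ trace_eq_zero)
  · intro trace_div r hr
    exact (no_root_iff hr).2 (trace_div _ (by rw [map_add, trace_one, hr, add_zero]))

theorem odd_finrank_of_injective_quintic {β : F} (hβ : β ≠ 0)
    (hinj : Function.Injective (quintic β)) : Odd (finrank (ZMod 2) F) := by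
  by_contra heven
  have trace_one : trace (ZMod 2) F 1 = 0 := by
    rw [trace_one_eq_finrank, ZMod.natCast_eq_zero_iff_even, ← Nat.not_odd_iff_even]
    exact heven
  obtain ⟨b, rfl⟩ := exists_sq_eq_of_charTwo β
  refine (injective_quintic_iff_forall_quadratic_ne_zero hβ).1 hinj 1 trace_one ⟨b, ?_⟩
  linear_combination (2 * b ^ 2 + b) * CharTwo.two_eq_zero (R := F)

theorem two_lt_finrank_of_odd_of_sq_ne_self (hn : Odd (finrank (ZMod 2) F)) {b : F}
    (hb : b ^ 2 ≠ b) : 2 < finrank (ZMod 2) F := by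
  have finrank_ne_one : finrank (ZMod 2) F ≠ 1 := fun h ↦ hb <| by
    have := Fintype.ofFinite F
    simpa [Module.card_eq_pow_finrank (K := ZMod 2) (V := F), h] using FiniteField.pow_card b
  obtain ⟨k, hk⟩ := hn
  omega

theorem injective_quintic_iff {β : F} (hβ : β ≠ 0) :
    Function.Injective (quintic β) ↔ β = 1 ∧ Odd (finrank (ZMod 2) F) := by
  constructor
  · intro hinj
    have hn := odd_finrank_of_injective_quintic hβ hinj
    refine ⟨?_, hn⟩
    obtain ⟨b, rfl⟩ := exists_sq_eq_of_charTwo β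
    have hb : b ≠ 0 := ne_zero_pow two_ne_zero hβ
    by_contra hb1
    have sq_ne : b ^ 2 ≠ b := fun h ↦ hb1 <| by
      rw [h]
      exact mul_left_cancel₀ hb (by rw [← sq, h, mul_one])
    obtain ⟨x, hx, trace_ne⟩ := exists_trace_eq_and_trace_div_ne
      (two_lt_finrank_of_odd_of_sq_ne_self hn sq_ne) one_ne_zero (trace (ZMod 2) F b + 1)
      (mt CharTwo.add_eq_zero.1 sq_ne)
    exact trace_ne ((injective_quintic_sq_iff_of_odd hn hb).1 hinj x hx)
  · rintro ⟨rfl, hn⟩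
    rw [← one_pow 2, injective_quintic_sq_iff_of_odd hn one_ne_zero]
    intro x _
    rw [one_pow, CharTwo.add_self_eq_zero, zero_div, map_zero, trace_one_eq_finrank,
      ZMod.natCast_eq_one_iff_odd.2 hn, CharTwo.add_self_eq_zero]

end CharTwo

theorem stmt_18 (m : ℕ) (hm : 0 < m)
    (F : Type*) [Field F] [Fintype F] (hF : Fintype.card F = 2 ^ m) :
    (Odd m → Function.Bijective (fun u : F => u ^ 5 + u ^ 3 + u)) ∧
      ∀ γ : F, γ ≠ 0 →
        (Function.Bijective (fun u : F => u ^ 5 + u ^ 3 + γ⁻¹ * u) ↔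
          γ = 1 ∧ Odd m) := by
  have : CharP F 2 := charP_of_card_eq_prime_pow hF
  have finrank_eq : finrank (ZMod 2) F = m :=
    Nat.pow_right_injective le_rfl <| by
      simpa [hF] using (card_eq_pow_finrank (K := ZMod 2) (V := F)).symm
  have bijective_iff (γ : F) (hγ : γ ≠ 0) :
      Function.Bijective (fun u : F ↦ u ^ 5 + u ^ 3 + γ⁻¹ * u) ↔ γ = 1 ∧ Odd m := by
    rw [← Finite.injective_iff_bijective, ← inv_eq_one, ← finrank_eq]
    exact injective_quintic_iff (inv_ne_zero hγ)
  refine ⟨fun hodd ↦ ?_, bijective_iff⟩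
  simpa only [inv_one, one_mul] using (bijective_iff 1 one_ne_zero).2 ⟨rfl, hodd⟩
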